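/- arXiv:cs/0408068 — 2 statements merged into one kernel-verified Lean document; each statement's English description precedes it below -/
import Mathlib

section
/- There exists a constant C > 0 such that for all sufficiently large b > 1, for every point o ∈ ℝ₊² with D_δ(o) ⊆ ℝ₊², for every index 0 ≤ i < L, and for all points q ∈ Q_i and u ∈ R_i, one has X̂(q,u) ≤ X(q̃_i, ũ_i) ≤ C/(b·(log b)³), where X̂(q,u) is the area of (D₁(q) ∪ D₁(u))ᶜ ∩ D̂₁(o). -/
open MeasureTheory Real Set
open scoped ENNReal

noncomputable section

/-- The Euclidean plane ℝ². -/
abbrev Plane := EuclideanSpace ℝ (Fin 2)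

/-- The point in the plane with Cartesian coordinates `(x, y)`. -/
def pt (x y : ℝ) : Plane := (WithLp.equiv 2 (Fin 2 → ℝ)).symm ![x, y]

/-- `D p r` is the closed disk of radius `r` centered at `p`. -/
def D (p : Plane) (r : ℝ) : Set Plane := Metric.closedBall p r

/-- `X o q u` is the area of `D₁(o) \ (D₁(q) ∪ D₁(u))` (Lebesgue measure). -/
def X (o q u : Plane) : ℝ := (volume (D o 1 \ (D q 1 ∪ D u 1))).toReal

/-- `L = ⌊b^(1/3) (log b)²⌋`. -/
def L (b : ℝ) : ℕ := ⌊b ^ (1/3 : ℝ) * (Real.log b) ^ 2⌋₊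

/-- `δ = 1/(b^(1/3) log b)`. -/
def δ (b : ℝ) : ℝ := 1 / (b ^ (1/3 : ℝ) * Real.log b)

/-- `θb = π / L`. -/
def θb (b : ℝ) : ℝ := Real.pi / L b

/-- The point with polar coordinates `(r, θ)` relative to `o`. -/
def polarPt (o : Plane) (r θ : ℝ) : Plane := o + r • pt (Real.cos θ) (Real.sin θ)

/-- The sector `Q_i` of the disk `D_δ(o)`: points with polar coordinates `(r, θ)` relative
to `o` satisfying `0 < r ≤ δ` and `(i - 1/2)θ_b ≤ θ ≤ (i + 1/2)θ_b`. -/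
def Qsector (o : Plane) (b : ℝ) (i : ℕ) : Set Plane :=
  {p | ∃ r θ : ℝ, 0 < r ∧ r ≤ δ b ∧
    ((i : ℝ) - 1/2) * θb b ≤ θ ∧ θ ≤ ((i : ℝ) + 1/2) * θb b ∧ p = polarPt o r θ}

/-- The sector `R_i`, the reflection of `Q_i` through `o`: points with polar coordinates
`(r, θ)` relative to `o` satisfying `0 < r ≤ δ` and `(i - 1/2)θ_b ≤ θ - π ≤ (i + 1/2)θ_b`. -/
def Rsector (o : Plane) (b : ℝ) (i : ℕ) : Set Plane :=
  {p | ∃ r θ : ℝ, 0 < r ∧ r ≤ δ b ∧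
    ((i : ℝ) - 1/2) * θb b ≤ θ - Real.pi ∧ θ - Real.pi ≤ ((i : ℝ) + 1/2) * θb b ∧
    p = polarPt o r θ}

/-- The extreme point `q̃_i`, with polar coordinates `(δ, (i - 1/2)θ_b)` relative to `o`. -/
def qtil (o : Plane) (b : ℝ) (i : ℕ) : Plane := polarPt o (δ b) (((i : ℝ) - 1/2) * θb b)

/-- The extreme point `ũ_i`, with polar coordinates `(δ, (i + 1/2)θ_b + π)` relative to `o`. -/
def util (o : Plane) (b : ℝ) (i : ℕ) : Plane :=
  polarPt o (δ b) (((i : ℝ) + 1/2) * θb b + Real.pi)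

/-- The closed positive quadrant `ℝ₊²`. -/
def quad : Set Plane := {p | 0 ≤ p 0 ∧ 0 ≤ p 1}

/-- The truncated unit disk `D̂₁(o) = D₁(o) ∩ ℝ₊²`. -/
def Dhat (o : Plane) : Set Plane := D o 1 ∩ quad

/-- `X̂(q,u)` is the area of `(D₁(q) ∪ D₁(u))ᶜ ∩ D̂₁(o)`. -/
def Xhat (o q u : Plane) : ℝ := (volume (Dhat o \ (D q 1 ∪ D u 1))).toReal

/-!
For fixed distances of `q` and `u` from `o`, the omitted area grows as `q` and `u` approach each
other. Indeed, move `u` to a point `u'` of the same circle around `o` that is closer to `q`, and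
reflect in the line through `o` swapping `u` and `u'`: the part of the omitted region that becomes
covered is mapped into the part that becomes uncovered, because the reflection moves points on the
side of `u'` away from `q`. Moving `q` or `u` radially away from `o` only enlarges the omitted
region, so the extreme points, which lie on the circle of radius `δ` and are as close to each other
as the sectors permit there, maximize the omitted area.

At the extreme points, `q - o` and `u - o` have length `δ` and sum to a vector of length
`O(δ * θb) = O(δ ^ 2)`. Expanding the defining inequalities of the omitted region confines it to
the intersection of a strip of width `O(δ)` with an annulus of width `O(δ ^ 2)`. In the plane this
intersection has area `O(δ ^ 3)`, and `δ ^ 3 = 1 / (b * log b ^ 3)`.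
-/

open scoped RealInnerProductSpace

section OmittedRegion

/-- The points of the closed ball of radius `r` centered at `0` lying in neither of the closed balls
of radius `r` centered at `v` and `w`. The paper's omitted region around `o` is recovered by
translating `o` to the origin. -/
def omittedRegion {E : Type*} [SeminormedAddCommGroup E] (r : ℝ) (v w : E) : Set E :=
  Metric.closedBall 0 r \ (Metric.closedBall v r ∪ Metric.closedBall w r)

variable {E : Type*} [SeminormedAddCommGroup E]

lemma mem_omittedRegion {r : ℝ} {v w x : E} :
    x ∈ omittedRegion r v w ↔ ‖x‖ ≤ r ∧ r < ‖x - v‖ ∧ r < ‖x - w‖ := by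
  simp only [omittedRegion, mem_sdiff, mem_union, mem_closedBall_iff_norm, sub_zero, not_or, not_le]

lemma measurableSet_omittedRegion [MeasurableSpace E] [OpensMeasurableSpace E] (r : ℝ) (v w : E) :
    MeasurableSet (omittedRegion r v w) :=
  measurableSet_closedBall.diff (measurableSet_closedBall.union measurableSet_closedBall)

lemma measure_omittedRegion_ne_top [ProperSpace E] [MeasurableSpace E] (μ : Measure E)
    [IsFiniteMeasureOnCompacts μ] (r : ℝ) (v w : E) :
    μ (omittedRegion r v w) ≠ ∞ :=
  measure_ne_top_of_subset sdiff_subset measure_closedBall_lt_top.ne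

lemma closedBall_inter_closedBall_subset_of_mem_segment [NormedSpace ℝ E] {a b p : E}
    (hp : p ∈ segment ℝ a b) (r : ℝ) :
    Metric.closedBall a r ∩ Metric.closedBall b r ⊆ Metric.closedBall p r := fun x hx =>
  Metric.mem_closedBall_comm.1 <| (convex_closedBall x r).segment_subset
    (Metric.mem_closedBall_comm.1 hx.1) (Metric.mem_closedBall_comm.1 hx.2) hp

lemma omittedRegion_subset_of_mem_segment [NormedSpace ℝ E] {v v' w w' : E}
    (hv : v ∈ segment ℝ 0 v') (hw : w ∈ segment ℝ 0 w') (r : ℝ) :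
    omittedRegion r v w ⊆ omittedRegion r v' w' := fun _ ⟨hx, hvw⟩ =>
  ⟨hx, fun h => hvw <| h.imp
    (fun h => closedBall_inter_closedBall_subset_of_mem_segment hv r ⟨hx, h⟩)
    (fun h => closedBall_inter_closedBall_subset_of_mem_segment hw r ⟨hx, h⟩)⟩

end OmittedRegion

section Reflection

variable {E : Type*} [NormedAddCommGroup E] [InnerProductSpace ℝ E]

lemma inner_sub_nonneg_of_norm_sub_le {a c x : E} (hac : ‖a‖ = ‖c‖) (hx : ‖x - a‖ ≤ ‖x - c‖) :
    0 ≤ ⟪a - c, x⟫ := by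
  have hsq := pow_le_pow_left₀ (norm_nonneg _) hx 2
  rw [norm_sub_sq_real, norm_sub_sq_real, hac] at hsq
  rw [real_inner_comm, inner_sub_right]
  linarith

lemma norm_sub_le_norm_sub_reflection {v x y : E} (hx : 0 ≤ ⟪v, x⟫) (hy : 0 ≤ ⟪v, y⟫) :
    ‖x - y‖ ≤ ‖x - (ℝ ∙ v)ᗮ.reflection y‖ := by
  have hreflect : (ℝ ∙ v)ᗮ.reflection y = y - (2 * (⟪v, y⟫ / ‖v‖ ^ 2)) • v := by
    rw [Submodule.reflection_orthogonal_apply, Submodule.reflection_singleton_apply, neg_sub,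
      ← Nat.cast_smul_eq_nsmul ℝ, smul_smul]
    norm_num
  have hinner : ⟪x, (ℝ ∙ v)ᗮ.reflection y⟫ ≤ ⟪x, y⟫ := by
    rw [hreflect, inner_sub_right, inner_smul_right, real_inner_comm v x]
    exact sub_le_self _ (by positivity)
  refine (sq_le_sq₀ (norm_nonneg _) (norm_nonneg _)).1 ?_
  rw [norm_sub_sq_real, norm_sub_sq_real, LinearIsometryEquiv.norm_map]
  linarith

lemma mapsTo_reflection_omittedRegion_inter_closedBall {v w w' : E} (r : ℝ) (hw : ‖w‖ = ‖w'‖)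
    (hle : ‖v - w'‖ ≤ ‖v - w‖) :
    MapsTo (ℝ ∙ (w' - w))ᗮ.reflection (omittedRegion r v w ∩ Metric.closedBall w' r)
      (omittedRegion r v w' ∩ Metric.closedBall w r) := by
  set τ := (ℝ ∙ (w' - w))ᗮ.reflection
  have hτw' : τ w' = w := Submodule.reflection_sub hw.symm
  have hτw : τ w = w' := by rw [← hτw', Submodule.reflection_reflection]
  rintro x ⟨hx, hxw'⟩
  obtain ⟨hxr, hxv, hxw⟩ := mem_omittedRegion.1 hx
  rw [mem_closedBall_iff_norm] at hxw'
  have hfar : ‖v - x‖ ≤ ‖v - τ x‖ := norm_sub_le_norm_sub_reflection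
    (inner_sub_nonneg_of_norm_sub_le hw.symm hle)
    (inner_sub_nonneg_of_norm_sub_le hw.symm (hxw'.trans hxw.le))
  rw [norm_sub_rev v, norm_sub_rev v] at hfar
  have hτxw : ‖τ x - w‖ = ‖x - w'‖ := by rw [← hτw', ← map_sub, τ.norm_map]
  have hτxw' : ‖τ x - w'‖ = ‖x - w‖ := by rw [← hτw, ← map_sub, τ.norm_map]
  refine ⟨mem_omittedRegion.2 ⟨(τ.norm_map x).trans_le hxr, hxv.trans_le hfar, ?_⟩, ?_⟩
  · rwa [hτxw']
  · rwa [mem_closedBall_iff_norm, hτxw]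

variable [FiniteDimensional ℝ E] [MeasurableSpace E] [BorelSpace E]

lemma volume_omittedRegion_map {F : Type*} [NormedAddCommGroup F] [InnerProductSpace ℝ F]
    [FiniteDimensional ℝ F] [MeasurableSpace F] [BorelSpace F] (f : E ≃ₗᵢ[ℝ] F) (r : ℝ) (v w : E) :
    volume (omittedRegion r (f v) (f w)) = volume (omittedRegion r v w) := by
  rw [← f.measurePreserving.measure_preimage (measurableSet_omittedRegion _ _ _).nullMeasurableSet]
  congr 1
  ext x
  simp only [mem_preimage, mem_omittedRegion, ← map_sub, f.norm_map]

lemma volume_omittedRegion_le_of_norm_sub_le_right {v w w' : E} (r : ℝ) (hw : ‖w‖ = ‖w'‖)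
    (hle : ‖v - w'‖ ≤ ‖v - w‖) :
    volume (omittedRegion r v w) ≤ volume (omittedRegion r v w') := by
  have hball (p : E) : MeasurableSet (Metric.closedBall p r) := measurableSet_closedBall
  have hcovered : volume (omittedRegion r v w ∩ Metric.closedBall w' r) ≤
      volume (omittedRegion r v w' ∩ Metric.closedBall w r) := by
    rw [← (ℝ ∙ (w' - w))ᗮ.reflection.measurePreserving.measure_preimage
      ((measurableSet_omittedRegion r v w').inter (hball w)).nullMeasurableSet]
    exact measure_mono (mapsTo_reflection_omittedRegion_inter_closedBall r hw hle)
  have huncovered : omittedRegion r v w \ Metric.closedBall w' r ⊆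
      omittedRegion r v w' \ Metric.closedBall w r := by
    intro x
    simp only [omittedRegion, mem_sdiff, mem_union]
    tauto
  calc volume (omittedRegion r v w)
      = volume (omittedRegion r v w ∩ Metric.closedBall w' r) +
          volume (omittedRegion r v w \ Metric.closedBall w' r) :=
        (measure_inter_add_sdiff _ (hball w')).symm
    _ ≤ volume (omittedRegion r v w' ∩ Metric.closedBall w r) +
          volume (omittedRegion r v w' \ Metric.closedBall w r) :=
        add_le_add hcovered (measure_mono huncovered)
    _ = volume (omittedRegion r v w') := measure_inter_add_sdiff _ (hball w)

lemma volume_omittedRegion_le_of_norm_sub_le {v w v' w' : E} (r : ℝ) (hv : ‖v‖ = ‖v'‖)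
    (hw : ‖w‖ = ‖w'‖) (hle : ‖v' - w'‖ ≤ ‖v - w‖) :
    volume (omittedRegion r v w) ≤ volume (omittedRegion r v' w') := by
  let τ := (ℝ ∙ (v - v'))ᗮ.reflection
  have hτv : τ v = v' := Submodule.reflection_sub hv
  rw [← volume_omittedRegion_map τ, hτv]
  refine volume_omittedRegion_le_of_norm_sub_le_right r ((τ.norm_map w).trans hw) ?_
  rwa [← hτv, ← map_sub, τ.norm_map, hτv]

end Reflection

section NearlyAntipodal

lemma volume_abs_preimage_Icc_le (p q : ℝ) :
    volume (abs ⁻¹' Icc p q) ≤ ENNReal.ofReal (2 * (q - p)) := by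
  have hsub : abs ⁻¹' Icc p q ⊆ Icc p q ∪ Icc (-q) (-p) := by
    intro t ht
    rcases abs_choice t with h | h <;> rw [mem_preimage, h] at ht
    · exact Or.inl ht
    · exact Or.inr ⟨neg_le.1 ht.2, le_neg.1 ht.1⟩
  calc volume (abs ⁻¹' Icc p q)
      ≤ volume (Icc p q) + volume (Icc (-q) (-p)) :=
        (measure_mono hsub).trans (measure_union_le _ _)
    _ = ENNReal.ofReal (2 * (q - p)) := by
        rw [Real.volume_Icc, Real.volume_Icc, neg_sub_neg, ENNReal.ofReal_mul zero_le_two,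
          ENNReal.ofReal_ofNat, two_mul]

lemma abs_mem_Icc_of_sq_add_sq_mem_Icc {s t a c : ℝ} (hs : |s| ≤ a)
    (hst : s ^ 2 + t ^ 2 ∈ Icc (1 - c) 1) : |t| ∈ Icc (1 - (c + a ^ 2)) 1 := by
  have ht : |t| ≤ 1 := (sq_le_one_iff_abs_le_one t).1 (by linarith [hst.2, sq_nonneg s])
  have hsq : s ^ 2 ≤ a ^ 2 := sq_le_sq' (abs_le.1 hs).1 (abs_le.1 hs).2
  have ht_sq : t ^ 2 ≤ |t| := by
    rw [← sq_abs, sq]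
    exact mul_le_of_le_one_right (abs_nonneg t) ht
  exact ⟨by linarith [hst.1], ht⟩

variable {E : Type*} [NormedAddCommGroup E] [InnerProductSpace ℝ E]

lemma exists_orthonormalBasis_apply_eq [FiniteDimensional ℝ E] {ι : Type*} [Fintype ι]
    (hE : Module.finrank ℝ E = Fintype.card ι) (i : ι) {e : E} (he : ‖e‖ = 1) :
    ∃ B : OrthonormalBasis ι ℝ E, B i = e := by
  have horth : Orthonormal ℝ (({i} : Set ι).domRestrict fun _ => e) :=
    ⟨fun _ => he, fun j k hjk => (hjk (Subsingleton.elim j k)).elim⟩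
  obtain ⟨B, hB⟩ := horth.exists_orthonormalBasis_extension_of_card_eq hE
  exact ⟨B, hB i rfl⟩

lemma volume_strip_inter_annulus_le [FiniteDimensional ℝ E] [MeasurableSpace E] [BorelSpace E]
    (hE : Module.finrank ℝ E = 2) {e : E} (he : ‖e‖ = 1) {a : ℝ} (ha : 0 ≤ a) (c : ℝ) :
    volume {x : E | |⟪e, x⟫| ≤ a ∧ 1 - c ≤ ‖x‖ ^ 2 ∧ ‖x‖ ≤ 1} ≤
      ENNReal.ofReal (4 * a * (c + a ^ 2)) := by
  obtain ⟨B, hB⟩ := exists_orthonormalBasis_apply_eq (hE.trans (Fintype.card_fin 2).symm) 0 he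
  let box : Set (Fin 2 → ℝ) := univ.pi ![Icc (-a) a, abs ⁻¹' Icc (1 - (c + a ^ 2)) 1]
  have hcoords : MeasurePreserving fun x : E => WithLp.ofLp (B.repr x) :=
    (PiLp.volume_preserving_ofLp (Fin 2)).comp B.measurePreserving_repr
  have hbox_meas : MeasurableSet box := by
    refine MeasurableSet.univ_pi (Fin.forall_fin_two.2 ⟨measurableSet_Icc, ?_⟩)
    exact measurableSet_Icc.preimage continuous_abs.measurable
  have hsub : {x : E | |⟪e, x⟫| ≤ a ∧ 1 - c ≤ ‖x‖ ^ 2 ∧ ‖x‖ ≤ 1} ⊆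
      (fun x : E => WithLp.ofLp (B.repr x)) ⁻¹' box := by
    rintro x ⟨hxe, hxc, hx1⟩
    have hnorm : ‖x‖ ^ 2 = ⟪e, x⟫ ^ 2 + B.repr x 1 ^ 2 := by
      rw [← B.repr.norm_map x, EuclideanSpace.real_norm_sq_eq, Fin.sum_univ_two,
        B.repr_apply_apply, hB]
    have ht := abs_mem_Icc_of_sq_add_sq_mem_Icc hxe
      (hnorm ▸ ⟨hxc, pow_le_one₀ (norm_nonneg x) hx1⟩ : ⟪e, x⟫ ^ 2 + B.repr x 1 ^ 2 ∈ Icc (1 - c) 1)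
    refine mem_univ_pi.2 (Fin.forall_fin_two.2 ⟨?_, ht⟩)
    change B.repr x 0 ∈ Icc (-a) a
    rw [B.repr_apply_apply, hB]
    exact abs_le.1 hxe
  calc volume {x : E | |⟪e, x⟫| ≤ a ∧ 1 - c ≤ ‖x‖ ^ 2 ∧ ‖x‖ ≤ 1}
      ≤ volume box := by
        rw [← hcoords.measure_preimage hbox_meas.nullMeasurableSet]
        exact measure_mono hsub
    _ ≤ ENNReal.ofReal (2 * a) * ENNReal.ofReal (2 * (c + a ^ 2)) := by
        rw [volume_pi_pi, Fin.prod_univ_two]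
        refine mul_le_mul' ?_ ?_
        · exact (Real.volume_Icc.trans (by ring_nf)).le
        · exact (volume_abs_preimage_Icc_le _ _).trans_eq (by rw [sub_sub_cancel])
    _ = ENNReal.ofReal (4 * a * (c + a ^ 2)) := by
        rw [← ENNReal.ofReal_mul (by positivity)]
        ring_nf

lemma mem_strip_inter_annulus_of_mem_omittedRegion {d : ℝ} {v w x : E} (hv : ‖v‖ = d)
    (hw : ‖w‖ = d) (hvw : ‖v + w‖ ≤ d ^ 2) (hx : x ∈ omittedRegion 1 v w) :
    |⟪v, x⟫| ≤ 3 / 2 * d ^ 2 ∧ 1 - 4 * d ^ 2 ≤ ‖x‖ ^ 2 ∧ ‖x‖ ≤ 1 := by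
  obtain ⟨hx1, hxv, hxw⟩ := mem_omittedRegion.1 hx
  have hxsq : ‖x‖ ^ 2 ≤ 1 := pow_le_one₀ (norm_nonneg x) hx1
  have hv_far := one_lt_pow₀ hxv two_ne_zero
  have hw_far := one_lt_pow₀ hxw two_ne_zero
  rw [norm_sub_sq_real, real_inner_comm, hv] at hv_far
  rw [norm_sub_sq_real, real_inner_comm, hw] at hw_far
  have hsum : -(d ^ 2) ≤ ⟪v, x⟫ + ⟪w, x⟫ := by
    rw [← inner_add_left]
    refine neg_le_of_abs_le ((abs_real_inner_le_norm _ _).trans ?_)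
    exact (mul_le_of_le_one_right (norm_nonneg _) hx1).trans hvw
  exact ⟨abs_le.2 ⟨by linarith, by linarith⟩, by linarith, hx1⟩

lemma volume_omittedRegion_le_of_norm_add_le [FiniteDimensional ℝ E] [MeasurableSpace E]
    [BorelSpace E] (hE : Module.finrank ℝ E = 2) {d : ℝ} (hd : 0 < d) {v w : E} (hv : ‖v‖ = d)
    (hw : ‖w‖ = d) (hvw : ‖v + w‖ ≤ d ^ 2) :
    volume (omittedRegion 1 v w) ≤ ENNReal.ofReal (75 / 2 * d ^ 3) := by
  have he : ‖d⁻¹ • v‖ = 1 := by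
    rw [norm_smul, norm_inv, norm_of_nonneg hd.le, hv, inv_mul_cancel₀ hd.ne']
  calc volume (omittedRegion 1 v w)
      ≤ volume {x : E | |⟪d⁻¹ • v, x⟫| ≤ 3 / 2 * d ∧ 1 - 4 * d ^ 2 ≤ ‖x‖ ^ 2 ∧ ‖x‖ ≤ 1} := by
        refine measure_mono fun x hx => ?_
        obtain ⟨hstrip, hannulus⟩ := mem_strip_inter_annulus_of_mem_omittedRegion hv hw hvw hx
        refine ⟨?_, hannulus⟩
        rw [real_inner_smul_left, abs_mul, abs_of_pos (inv_pos.2 hd), inv_mul_le_iff₀ hd]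
        linarith
    _ ≤ ENNReal.ofReal (4 * (3 / 2 * d) * (4 * d ^ 2 + (3 / 2 * d) ^ 2)) :=
        volume_strip_inter_annulus_le hE he (by positivity) _
    _ = ENNReal.ofReal (75 / 2 * d ^ 3) := by ring_nf

end NearlyAntipodal

section Polar

lemma polarPt_sub_center (o : Plane) (r θ : ℝ) : polarPt o r θ - o = polarPt 0 r θ := by
  rw [polarPt, polarPt, add_sub_cancel_left, zero_add]

lemma inner_polarPt_zero (r s α β : ℝ) :
    ⟪polarPt 0 r α, polarPt 0 s β⟫ = r * s * cos (α - β) := by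
  simp only [polarPt, pt, zero_add, PiLp.inner_apply, Fin.sum_univ_two, PiLp.smul_apply,
    WithLp.equiv_symm_apply, Matrix.cons_val_zero, Matrix.cons_val_one, smul_eq_mul,
    RCLike.inner_apply, conj_trivial, cos_sub]
  ring

lemma norm_polarPt_zero (r θ : ℝ) : ‖polarPt 0 r θ‖ = |r| := by
  rw [norm_eq_sqrt_real_inner, inner_polarPt_zero, sub_self, cos_zero, mul_one,
    sqrt_mul_self_eq_abs]

lemma polarPt_zero_mem_segment {r s : ℝ} (hr : 0 ≤ r) (hrs : r ≤ s) (θ : ℝ) :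
    polarPt 0 r θ ∈ segment ℝ 0 (polarPt 0 s θ) := by
  have hs : 0 ≤ s := hr.trans hrs
  refine ⟨1 - r / s, r / s, sub_nonneg.2 (div_le_one_of_le₀ hrs hs), by positivity, by ring, ?_⟩
  rw [smul_zero, zero_add, polarPt, polarPt, zero_add, zero_add, smul_smul,
    div_mul_cancel_of_imp fun h => le_antisymm (hrs.trans h.le) hr]

lemma norm_polarPt_zero_sub_le_of_cos_le {r α β θ φ : ℝ} (h : cos (θ - φ) ≤ cos (α - β)) :
    ‖polarPt 0 r α - polarPt 0 r β‖ ≤ ‖polarPt 0 r θ - polarPt 0 r φ‖ := by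
  refine (sq_le_sq₀ (norm_nonneg _) (norm_nonneg _)).1 ?_
  simp only [norm_sub_sq_real, norm_polarPt_zero, inner_polarPt_zero]
  gcongr
  exact mul_self_nonneg r

lemma cos_sub_le_cos_sub_add_pi {α β θ φ : ℝ} (hαβ : β - α ≤ π) (hθ : θ ∈ Icc α β)
    (hφ : φ - π ∈ Icc α β) : cos (θ - φ) ≤ cos (α - (β + π)) := by
  have hgap : |φ - π - θ| ≤ β - α :=
    abs_le.2 ⟨by linarith [hθ.2, hφ.1], by linarith [hθ.1, hφ.2]⟩
  calc cos (θ - φ) = -cos |φ - π - θ| := by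
        rw [cos_abs, sub_right_comm, cos_sub_pi, neg_neg, ← cos_neg, neg_sub]
    _ ≤ -cos (β - α) :=
        neg_le_neg (cos_le_cos_of_nonneg_of_le_pi (abs_nonneg _) hαβ hgap)
    _ = cos (α - (β + π)) := by
        rw [← sub_sub, cos_sub_pi, ← cos_neg (β - α), neg_sub]

lemma norm_polarPt_zero_add_add_pi_le (r α β : ℝ) :
    ‖polarPt 0 r α + polarPt 0 r (β + π)‖ ≤ |r| * |α - β| := by
  refine (sq_le_sq₀ (norm_nonneg _) (by positivity)).1 ?_
  have hcos : cos (α - (β + π)) = -cos (α - β) := by rw [← sub_sub, cos_sub_pi]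
  rw [norm_add_sq_real, norm_polarPt_zero, norm_polarPt_zero, inner_polarPt_zero, hcos, mul_pow,
    sq_abs, sq_abs]
  nlinarith [one_sub_sq_div_two_le_cos (x := α - β), sq_nonneg r]

end Polar

section Sectors

lemma X_eq_volume_real_omittedRegion (o q u : Plane) :
    X o q u = volume.real (omittedRegion 1 (q - o) (u - o)) := by
  rw [X, measureReal_def, ← (measurePreserving_sub_right volume o).measure_preimage
    (measurableSet_omittedRegion _ _ _).nullMeasurableSet]
  congr 2
  ext x
  simp only [D, mem_preimage, mem_omittedRegion, mem_sdiff, mem_union, mem_closedBall_iff_norm,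
    sub_sub_sub_cancel_right, not_or, not_le]

lemma X_polarPt (o : Plane) (r s α β : ℝ) :
    X o (polarPt o r α) (polarPt o s β) =
      volume.real (omittedRegion 1 (polarPt 0 r α) (polarPt 0 s β)) := by
  rw [X_eq_volume_real_omittedRegion, polarPt_sub_center, polarPt_sub_center]

lemma Xhat_le_X (o q u : Plane) : Xhat o q u ≤ X o q u :=
  measureReal_mono (sdiff_subset_sdiff_left inter_subset_left)
    (measure_ne_top_of_subset sdiff_subset measure_closedBall_lt_top.ne)

lemma θb_nonneg (b : ℝ) : 0 ≤ θb b := div_nonneg pi_pos.le (Nat.cast_nonneg _)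

lemma θb_le_pi (b : ℝ) : θb b ≤ π := by
  rcases (L b).eq_zero_or_pos with hL | hL
  · rw [θb, hL, Nat.cast_zero, div_zero]
    exact pi_pos.le
  · exact div_le_self pi_pos.le (Nat.one_le_cast.2 hL)

lemma X_le_X_qtil_util {o q u : Plane} {b : ℝ} {i : ℕ} (hq : q ∈ Qsector o b i)
    (hu : u ∈ Rsector o b i) : X o q u ≤ X o (qtil o b i) (util o b i) := by
  obtain ⟨r, θ, hr, hrδ, hθα, hθβ, rfl⟩ := hq
  obtain ⟨s, φ, hs, hsδ, hφα, hφβ, rfl⟩ := hu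
  have hnorm (α β : ℝ) : ‖polarPt 0 (δ b) α‖ = ‖polarPt 0 (δ b) β‖ := by
    rw [norm_polarPt_zero, norm_polarPt_zero]
  have hgap : ((i : ℝ) + 1/2) * θb b - ((i : ℝ) - 1/2) * θb b ≤ π := by linarith [θb_le_pi b]
  rw [qtil, util, X_polarPt, X_polarPt]
  refine ENNReal.toReal_mono (measure_omittedRegion_ne_top volume _ _ _) ?_
  calc volume (omittedRegion 1 (polarPt 0 r θ) (polarPt 0 s φ))
      ≤ volume (omittedRegion 1 (polarPt 0 (δ b) θ) (polarPt 0 (δ b) φ)) :=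
        measure_mono <| omittedRegion_subset_of_mem_segment
          (polarPt_zero_mem_segment hr.le hrδ θ) (polarPt_zero_mem_segment hs.le hsδ φ) 1
    _ ≤ volume (omittedRegion 1 (polarPt 0 (δ b) (((i : ℝ) - 1/2) * θb b))
          (polarPt 0 (δ b) (((i : ℝ) + 1/2) * θb b + π))) :=
        volume_omittedRegion_le_of_norm_sub_le 1 (hnorm _ _) (hnorm _ _) <|
          norm_polarPt_zero_sub_le_of_cos_le <|
            cos_sub_le_cos_sub_add_pi hgap ⟨hθα, hθβ⟩ ⟨hφα, hφβ⟩

lemma X_qtil_util_le {b : ℝ} (hδ : 0 < δ b) (hθδ : θb b ≤ δ b) (o : Plane) (i : ℕ) :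
    X o (qtil o b i) (util o b i) ≤ 75 / 2 * δ b ^ 3 := by
  have hnorm (α : ℝ) : ‖polarPt 0 (δ b) α‖ = δ b := by
    rw [norm_polarPt_zero, abs_of_pos hδ]
  have hangle : ((i : ℝ) - 1/2) * θb b - ((i : ℝ) + 1/2) * θb b = -θb b := by ring
  rw [qtil, util, X_polarPt]
  refine ENNReal.toReal_le_of_le_ofReal (by positivity) ?_
  refine volume_omittedRegion_le_of_norm_add_le finrank_euclideanSpace_fin hδ (hnorm _) (hnorm _) ?_
  calc ‖polarPt 0 (δ b) (((i : ℝ) - 1/2) * θb b) + polarPt 0 (δ b) (((i : ℝ) + 1/2) * θb b + π)‖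
      ≤ |δ b| * |((i : ℝ) - 1/2) * θb b - ((i : ℝ) + 1/2) * θb b| :=
        norm_polarPt_zero_add_add_pi_le _ _ _
    _ = δ b * θb b := by
        rw [hangle, abs_neg, abs_of_pos hδ, abs_of_nonneg (θb_nonneg b)]
    _ ≤ δ b ^ 2 := by
        rw [sq]
        gcongr

lemma δ_pos {b : ℝ} (hb : 1 < b) : 0 < δ b :=
  one_div_pos.2 (mul_pos (rpow_pos_of_pos (zero_lt_one.trans hb) _) (log_pos hb))

lemma δ_pow_three {b : ℝ} (hb : 0 ≤ b) : δ b ^ 3 = 1 / (b * log b ^ 3) := by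
  have hcube : (b ^ (1 / 3 : ℝ)) ^ 3 = b := by
    rw [← rpow_natCast, ← rpow_mul hb]
    norm_num
  rw [δ, div_pow, mul_pow, hcube, one_pow]

lemma θb_le_δ {b : ℝ} (hb : exp 5 ≤ b) : θb b ≤ δ b := by
  have hb1 : 1 ≤ b := (one_le_exp (by norm_num)).trans hb
  have hlog : 5 ≤ log b := (le_log_iff_exp_le (by linarith)).2 hb
  have hroot : 1 ≤ b ^ (1 / 3 : ℝ) := one_le_rpow hb1 (by norm_num)
  have hprod : 5 ≤ b ^ (1 / 3 : ℝ) * log b := by nlinarith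
  have hfloor : b ^ (1 / 3 : ℝ) * log b ^ 2 - 1 < L b := Nat.sub_one_lt_floor _
  have hL : π * (b ^ (1 / 3 : ℝ) * log b) ≤ L b := by nlinarith [pi_le_four]
  have hL_pos : (0 : ℝ) < L b := lt_of_lt_of_le (by positivity) hL
  rwa [θb, δ, div_le_div_iff₀ hL_pos (by linarith), one_mul]

end Sectors

theorem truncated_omitted_area_bound_general :
    ∃ C > (0 : ℝ), ∃ b₀ : ℝ, 1 < b₀ ∧
      ∀ b : ℝ, b₀ ≤ b → ∀ (o : Plane) (i : ℕ), ∀ q ∈ Qsector o b i, ∀ u ∈ Rsector o b i,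
        X o q u ≤ X o (qtil o b i) (util o b i) ∧
        X o (qtil o b i) (util o b i) ≤ C / (b * log b ^ 3) := by
  refine ⟨75 / 2, by norm_num, exp 5, one_lt_exp_iff.2 (by norm_num), ?_⟩
  intro b hb o i q hq u hu
  have hb1 : 1 < b := (one_lt_exp_iff.2 (by norm_num)).trans_le hb
  refine ⟨X_le_X_qtil_util hq hu, ?_⟩
  rw [← mul_one_div, ← δ_pow_three (zero_le_one.trans hb1.le)]
  exact X_qtil_util_le (δ_pos hb1) (θb_le_δ hb) o i

/-- There is `C > 0` such that for all sufficiently large `b > 1`, every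
`o ∈ ℝ₊²` with `D_δ(o) ⊆ ℝ₊²`, every `0 ≤ i < L`, and all `q ∈ Q_i`, `u ∈ R_i`:
`X̂(q,u) ≤ X(q̃_i, ũ_i) ≤ C / (b (log b)³)`. -/
theorem truncated_omitted_area_bound :
    ∃ C > (0 : ℝ), ∃ b₀ : ℝ, 1 < b₀ ∧
      ∀ b : ℝ, b₀ ≤ b → ∀ o : Plane, o ∈ quad → D o (δ b) ⊆ quad →
        ∀ i : ℕ, i < L b → ∀ q ∈ Qsector o b i, ∀ u ∈ Rsector o b i,
          Xhat o q u ≤ X o (qtil o b i) (util o b i) ∧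
          X o (qtil o b i) (util o b i) ≤ C / (b * (Real.log b) ^ 3) := by
  obtain ⟨C, hC, b₀, hb₀, h⟩ := truncated_omitted_area_bound_general
  exact ⟨C, hC, b₀, hb₀, fun b hb o _ _ i _ q hq u hu =>
    (h b hb o i q hq u hu).imp_left (Xhat_le_X o q u).trans⟩
end
end

section
/- There exist a constant C > 0 and b₀ such that for all integers b ≥ b₀ and all points o ∈ ℝ₊² with D_δ(o) ⊆ ℝ₊², the probability that τ_b < b^{1/3}/(16·(log b)⁶) is at most C·(log b)⁶/b^{1/3}. -/
open MeasureTheory Real Set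
open scoped ENNReal

noncomputable section

/-- `λ̂(o) = π / |D̂₁(o)|`. -/
def lamHat (o : Plane) : ℝ := Real.pi / (volume (Dhat o)).toReal

/-- The uniform probability measure on a set `S` (normalized restricted Lebesgue measure). -/
def unif (S : Set Plane) : Measure Plane := (volume S)⁻¹ • volume.restrict S

/-- The joint law of `b` points chosen independently and uniformly at random from `D̂₁(o)`. -/
def ptsMeasure (o : Plane) (b : ℕ) : Measure (Fin b → Plane) :=
  Measure.pi fun _ => unif (Dhat o)

/-- The number of the points `ω 0, …, ω (b-1)` that lie in the set `S`. -/
def countIn {b : ℕ} (S : Set Plane) (ω : Fin b → Plane) : ℕ :=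
  Set.ncard {j : Fin b | ω j ∈ S}

open scoped Classical in
/-- `τ_b = Σ_{i=0}^{L-1} 1[N(Q_i) = 1 ∧ N(R_i) = 1]`. -/
def tau (o : Plane) (b : ℕ) (ω : Fin b → Plane) : ℕ :=
  ∑ i ∈ Finset.range (L b),
    if countIn (Qsector o b i) ω = 1 ∧ countIn (Rsector o b i) ω = 1 then 1 else 0

/-!
Up to a null set, the sectors `Q_i` and `R_i` are the `2L` disjoint congruent half-open sectors of
the disk of radius `δ` about `o`, and a uniform point of `D̂₁(o)` falls into each of them with the
same probability `p`. Hence `k` given sectors contain exactly one of the `b` points each with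
probability `b (b - 1) ⋯ (b - k + 1) p ^ k (1 - k p) ^ (b - k)`. Comparing this for `k = 4` and
`k = 2` shows that the events counted by `τ` are pairwise negatively correlated, so the variance of
`τ` is at most its mean `m`, and Chebyshev's inequality bounds `Pr(τ ≤ m / 2)` by `4 / m`. Finally
`m ≥ L (b p) ^ 2 / 2 ≥ b ^ (1 / 3) / (8 (log b) ^ 6)`, because `L p = π δ ^ 2 / (2 |D̂₁(o)|)`
with `|D̂₁(o)| ≤ π`, while `L ≤ b ^ (1 / 3) (log b) ^ 2`.
-/

section SecondMoment

open ProbabilityTheory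

variable {Ω : Type*} [MeasurableSpace Ω] {P : Measure Ω}

lemma measure_le_half_integral_le [IsFiniteMeasure P] {Y : Ω → ℝ} (hY : MemLp Y 2 P)
    (hvar : Var[Y; P] ≤ P[Y]) (hpos : 0 < P[Y]) :
    P {ω | Y ω ≤ P[Y] / 2} ≤ ENNReal.ofReal (4 / P[Y]) := by
  calc P {ω | Y ω ≤ P[Y] / 2}
      ≤ P {ω | P[Y] / 2 ≤ |Y ω - P[Y]|} := by
        refine measure_mono fun ω (hω : Y ω ≤ P[Y] / 2) ↦ ?_
        have hdev : P[Y] / 2 ≤ -(Y ω - P[Y]) := by linarith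
        exact hdev.trans (neg_le_abs _)
    _ ≤ ENNReal.ofReal (Var[Y; P] / (P[Y] / 2) ^ 2) :=
        meas_ge_le_variance_div_sq hY (half_pos hpos)
    _ ≤ ENNReal.ofReal (P[Y] / (P[Y] / 2) ^ 2) := by gcongr
    _ = ENNReal.ofReal (4 / P[Y]) := by congr 1; field_simp; norm_num

lemma memLp_indicator_one [IsFiniteMeasure P] {A : Set Ω} (hA : MeasurableSet A) (p : ℝ≥0∞) :
    MemLp (A.indicator (1 : Ω → ℝ)) p P :=
  memLp_indicator_const p hA 1 (.inr (measure_ne_top _ _))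

lemma covariance_indicator_one [IsProbabilityMeasure P] {A B : Set Ω} (hA : MeasurableSet A)
    (hB : MeasurableSet B) :
    cov[A.indicator (1 : Ω → ℝ), B.indicator 1; P] = P.real (A ∩ B) - P.real A * P.real B := by
  rw [covariance_eq_sub (memLp_indicator_one hA 2) (memLp_indicator_one hB 2),
    ← inter_indicator_one, integral_indicator_one (hA.inter hB), integral_indicator_one hA,
    integral_indicator_one hB]

variable {ι : Type*} {s : Finset ι} {E : ι → Set Ω}

lemma integral_sum_indicator_one [IsFiniteMeasure P] (hE : ∀ i ∈ s, MeasurableSet (E i)) :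
    ∫ ω, ∑ i ∈ s, (E i).indicator (1 : Ω → ℝ) ω ∂P = ∑ i ∈ s, P.real (E i) := by
  rw [integral_finsetSum s fun i hi ↦ (memLp_indicator_one (hE i hi) 1).integrable le_rfl]
  exact Finset.sum_congr rfl fun i hi ↦ integral_indicator_one (hE i hi)

lemma variance_sum_indicator_one_le [IsProbabilityMeasure P] (hE : ∀ i ∈ s, MeasurableSet (E i))
    (hcorr : (s : Set ι).Pairwise fun i j ↦ P.real (E i ∩ E j) ≤ P.real (E i) * P.real (E j)) :
    Var[fun ω ↦ ∑ i ∈ s, (E i).indicator (1 : Ω → ℝ) ω; P] ≤ ∑ i ∈ s, P.real (E i) := by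
  classical
  rw [variance_fun_sum' fun i hi ↦ memLp_indicator_one (hE i hi) 2]
  refine Finset.sum_le_sum fun i hi ↦ ?_
  calc ∑ j ∈ s, cov[(E i).indicator (1 : Ω → ℝ), (E j).indicator 1; P]
      ≤ ∑ j ∈ s, if i = j then P.real (E i) else 0 := by
        refine Finset.sum_le_sum fun j hj ↦ ?_
        rw [covariance_indicator_one (hE i hi) (hE j hj)]
        split_ifs with hij
        · subst hij
          rw [inter_self]
          exact sub_le_self _ (by positivity)
        · exact sub_nonpos.2 (hcorr hi hj hij)
    _ = P.real (E i) := by rw [Finset.sum_ite_eq, if_pos hi]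

end SecondMoment

section Occupancy

variable {α κ ι : Type*} {A : ι → Set α}

lemma ofPred_forall_ncard_eq_one_eq_iUnion_embedding (hd : Pairwise (Function.onFun Disjoint A)) :
    {ω : κ → α | ∀ s, {j | ω j ∈ A s}.ncard = 1} =
      ⋃ f : ι ↪ κ, {ω | ∀ s, {j | ω j ∈ A s} = {f s}} := by
  ext ω
  simp only [mem_ofPred_eq, mem_iUnion, ncard_eq_one]
  refine ⟨fun h ↦ ?_, fun ⟨f, hf⟩ s ↦ ⟨f s, hf s⟩⟩
  choose f hf using h
  have hmem (s : ι) : ω (f s) ∈ A s := (hf s).ge (mem_singleton _)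
  refine ⟨⟨f, fun s t hst ↦ ?_⟩, hf⟩
  by_contra hne
  exact disjoint_left.1 (hd hne) (hmem s) (hst ▸ hmem t)

lemma ofPred_forall_eq_singleton_eq_pi_extend (hd : Pairwise (Function.onFun Disjoint A))
    (f : ι ↪ κ) :
    {ω : κ → α | ∀ s, {j | ω j ∈ A s} = {f s}} =
      univ.pi (Function.extend f A fun _ ↦ (⋃ s, A s)ᶜ) := by
  ext ω
  simp only [mem_ofPred_eq, mem_univ_pi, Set.ext_iff, mem_singleton_iff]
  constructor
  · intro h j
    by_cases hj : ∃ s, f s = j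
    · obtain ⟨s, rfl⟩ := hj
      rw [f.injective.extend_apply]
      exact (h s _).2 rfl
    · rw [Function.extend_apply' _ _ _ hj, mem_compl_iff, mem_iUnion]
      exact fun ⟨s, hs⟩ ↦ hj ⟨s, ((h s j).1 hs).symm⟩
  · intro h s j
    constructor
    · intro hjs
      have hj := h j
      by_cases hjf : ∃ t, f t = j
      · obtain ⟨t, rfl⟩ := hjf
        rw [f.injective.extend_apply] at hj
        by_contra hne
        exact disjoint_left.1 (hd fun hts ↦ hne (congrArg f hts)) hj hjs
      · rw [Function.extend_apply' _ _ _ hjf] at hj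
        exact absurd (mem_iUnion.2 ⟨s, hjs⟩) hj
    · rintro rfl
      simpa only [f.injective.extend_apply] using h (f s)

lemma prod_extend_const {M : Type*} [CommMonoid M] [Fintype ι] [Fintype κ] (f : ι ↪ κ)
    (g : ι → M) (c : M) :
    ∏ j, Function.extend f g (fun _ ↦ c) j =
      (∏ s, g s) * c ^ (Fintype.card κ - Fintype.card ι) := by
  classical
  rw [← Finset.prod_mul_prod_compl (Finset.univ.map f), Finset.prod_map,
    Finset.prod_congr rfl fun s _ ↦ f.injective.extend_apply _ _ s,
    Finset.prod_congr rfl fun j hj ↦ Function.extend_apply' _ _ j ?_, Finset.prod_const,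
    Finset.card_compl, Finset.card_map, Finset.card_univ]
  simpa using hj

variable (κ A) in
/-- The event that each of the cells `A s`, `s ∈ T`, contains exactly one of the points `ω j`. -/
def occupiedOnce (T : Finset ι) : Set (κ → α) := {ω | ∀ s ∈ T, {j | ω j ∈ A s}.ncard = 1}

lemma occupiedOnce_union [DecidableEq ι] (S T : Finset ι) :
    occupiedOnce κ A (S ∪ T) = occupiedOnce κ A S ∩ occupiedOnce κ A T := by
  ext ω
  exact Finset.forall_mem_union

variable [MeasurableSpace α]

lemma measurableSet_ofPred_fiber_eq_singleton [Countable κ] {B : Set α} (hB : MeasurableSet B)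
    (i : κ) : MeasurableSet {ω : κ → α | {j | ω j ∈ B} = {i}} := by
  simp only [Set.ext_iff, mem_ofPred_eq, mem_singleton_iff]
  exact measurableSet_setOfPred.2 <| .forall fun j ↦
    (measurableSet_setOfPred.1 (measurable_pi_apply j hB)).iff measurable_const

lemma measure_pi_forall_ncard_eq_one [Fintype κ] [Fintype ι] (μ : Measure α) [SigmaFinite μ]
    (hA : ∀ s, MeasurableSet (A s)) (hd : Pairwise (Function.onFun Disjoint A)) :
    Measure.pi (fun _ : κ ↦ μ) {ω | ∀ s, {j | ω j ∈ A s}.ncard = 1} =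
      (Fintype.card κ).descFactorial (Fintype.card ι) *
        ((∏ s, μ (A s)) * μ (⋃ s, A s)ᶜ ^ (Fintype.card κ - Fintype.card ι)) := by
  classical
  have hdisj : Pairwise (Function.onFun Disjoint
      fun f : ι ↪ κ ↦ {ω : κ → α | ∀ s, {j | ω j ∈ A s} = {f s}}) := fun f g hfg ↦
    disjoint_left.2 fun ω hf hg ↦
      hfg (DFunLike.ext _ _ fun s ↦ singleton_injective ((hf s).symm.trans (hg s)))
  have hmeas (f : ι ↪ κ) : MeasurableSet {ω : κ → α | ∀ s, {j | ω j ∈ A s} = {f s}} := by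
    rw [ofPred_forall]
    exact .iInter fun s ↦ measurableSet_ofPred_fiber_eq_singleton (hA s) (f s)
  have hbox (f : ι ↪ κ) : Measure.pi (fun _ ↦ μ) {ω : κ → α | ∀ s, {j | ω j ∈ A s} = {f s}} =
      (∏ s, μ (A s)) * μ (⋃ s, A s)ᶜ ^ (Fintype.card κ - Fintype.card ι) := by
    rw [ofPred_forall_eq_singleton_eq_pi_extend hd, Measure.pi_pi, ← prod_extend_const f]
    exact Finset.prod_congr rfl fun j _ ↦ Function.apply_extend μ (g := A) f _ j
  rw [ofPred_forall_ncard_eq_one_eq_iUnion_embedding hd, measure_iUnion hdisj hmeas, tsum_fintype,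
    Finset.sum_congr rfl fun f _ ↦ hbox f, Finset.sum_const, Finset.card_univ,
    Fintype.card_embedding_eq, nsmul_eq_mul]

lemma measurableSet_occupiedOnce [Countable κ] {T : Finset ι} (hA : ∀ s ∈ T, MeasurableSet (A s)) :
    MeasurableSet (occupiedOnce κ A T) := by
  simp only [occupiedOnce, ncard_eq_one, ofPred_forall, ofPred_exists]
  exact Finset.measurableSet_biInter T fun s hs ↦
    .iUnion fun i ↦ measurableSet_ofPred_fiber_eq_singleton (hA s hs) i

/-- The probability that `k` given disjoint cells, each of probability `p`, all contain exactly one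
of `n` independent points. -/
def occupancyProb (n k : ℕ) (p : ℝ) : ℝ := n.descFactorial k * (p ^ k * (1 - k * p) ^ (n - k))

lemma measureReal_occupiedOnce [Fintype κ] {μ : Measure α} [IsProbabilityMeasure μ] {p : ℝ}
    {T : Finset ι} (hA : ∀ s ∈ T, MeasurableSet (A s)) (hd : (T : Set ι).PairwiseDisjoint A)
    (hp : ∀ s ∈ T, μ.real (A s) = p) :
    (Measure.pi fun _ : κ ↦ μ).real (occupiedOnce κ A T) =
      occupancyProb (Fintype.card κ) T.card p := by
  have hdT : Pairwise (Function.onFun Disjoint fun s : T ↦ A s) :=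
    fun s t hst ↦ hd s.2 t.2 (Subtype.coe_injective.ne hst)
  have hprod : ∏ s : T, (μ (A s)).toReal = p ^ T.card := by
    rw [Finset.prod_congr rfl fun (s : T) _ ↦ show (μ (A s)).toReal = p from hp s s.2,
      Finset.prod_const, Finset.card_univ, Fintype.card_coe]
  have hcompl : (μ (⋃ s : T, A s)ᶜ).toReal = 1 - T.card * p := by
    rw [← measureReal_def, probReal_compl_eq_one_sub (.iUnion fun s : T ↦ hA s s.2),
      measureReal_iUnion_fintype hdT fun s : T ↦ hA s s.2,
      Finset.sum_congr rfl fun (s : T) _ ↦ hp s s.2, Finset.sum_const, Finset.card_univ,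
      Fintype.card_coe, nsmul_eq_mul]
  have hoccupied : occupiedOnce κ A T = {ω | ∀ s : T, {j | ω j ∈ A s}.ncard = 1} := by
    simp only [occupiedOnce, Subtype.forall]
  rw [hoccupied, measureReal_def, measure_pi_forall_ncard_eq_one μ (fun s : T ↦ hA s s.2) hdT,
    ENNReal.toReal_mul, ENNReal.toReal_mul, ENNReal.toReal_natCast, ENNReal.toReal_prod,
    ENNReal.toReal_pow, hprod, hcompl, Fintype.card_coe, occupancyProb]

-- Passing to `n - k` shrinks each factor by at least `(1 - kp)²`; this pays for the `k` points by
-- which the exponents of `(1 - 2kp)^(n - 2k)` and `((1 - kp)²)^(n - k)` differ when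
-- `occupancyProb n (2 * k) p` is compared with `occupancyProb n k p ^ 2`.
lemma descFactorial_sub_le {n k : ℕ} {p : ℝ} (hkn : 2 * k ≤ n) (hp : 0 ≤ p)
    (hnp : 2 * n * p ≤ 1) :
    ((n - k).descFactorial k : ℝ) ≤ n.descFactorial k * ((1 - k * p) ^ 2) ^ k := by
  simp only [Nat.descFactorial_eq_prod_range, Nat.cast_prod]
  rw [Finset.pow_eq_prod_const, ← Finset.prod_mul_distrib]
  refine Finset.prod_le_prod (fun i _ ↦ by positivity) fun i hi ↦ ?_
  have hik : i < k := Finset.mem_range.1 hi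
  have hin : (i : ℝ) ≤ n := by exact_mod_cast (by omega : i ≤ n)
  have hip : 2 * (n - i) * p ≤ 1 := le_trans (by gcongr; simp) hnp
  rw [Nat.cast_sub (by omega), Nat.cast_sub (by omega), Nat.cast_sub (by omega)]
  calc (n : ℝ) - k - i ≤ (n - i) * (1 - 2 * (k * p)) := by
        linarith [mul_le_mul_of_nonneg_left hip k.cast_nonneg]
    _ ≤ (n - i) * (1 - k * p) ^ 2 := by
        refine mul_le_mul_of_nonneg_left ?_ (sub_nonneg.2 hin)
        linarith [sq_nonneg (k * p)]

lemma occupancyProb_two_mul_le {n : ℕ} (k : ℕ) {p : ℝ} (hp : 0 ≤ p) (hnp : 2 * n * p ≤ 1) :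
    occupancyProb n (2 * k) p ≤ occupancyProb n k p ^ 2 := by
  rcases lt_or_ge n (2 * k) with hnk | hkn
  · rw [occupancyProb, Nat.descFactorial_of_lt hnk, Nat.cast_zero, zero_mul]
    positivity
  have hkp : 2 * k * p ≤ 1 := le_trans (by gcongr; omega) hnp
  have hdesc : (n.descFactorial (2 * k) : ℝ) = n.descFactorial k * (n - k).descFactorial k := by
    rw [← Nat.descFactorial_mul_descFactorial (show k ≤ 2 * k by omega), Nat.cast_mul, mul_comm,
      two_mul, Nat.add_sub_cancel]
  have hbase : 1 - 2 * k * p ≤ (1 - k * p) ^ 2 := by linarith [sq_nonneg (k * p)]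
  have hexp : k + (n - 2 * k) = n - k := by omega
  calc occupancyProb n (2 * k) p
      = n.descFactorial k * (n - k).descFactorial k *
          (p ^ (2 * k) * (1 - 2 * k * p) ^ (n - 2 * k)) := by
        rw [occupancyProb, hdesc, Nat.cast_mul, Nat.cast_ofNat]
    _ ≤ n.descFactorial k * (n.descFactorial k * ((1 - k * p) ^ 2) ^ k) *
          (p ^ (2 * k) * ((1 - k * p) ^ 2) ^ (n - 2 * k)) := by
        gcongr
        exact descFactorial_sub_le hkn hp hnp
    _ = occupancyProb n k p ^ 2 := by
        rw [occupancyProb, ← hexp]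
        generalize 1 - k * p = q
        ring

lemma sq_div_two_le_occupancyProb_two {n : ℕ} {p : ℝ} (hn : 4 ≤ n) (hp : 0 ≤ p)
    (hnp : 8 * n * p ≤ 1) : (n * p) ^ 2 / 2 ≤ occupancyProb n 2 p := by
  have hn' : (4 : ℝ) ≤ n := by exact_mod_cast hn
  have hdesc : (3 / 4 : ℝ) * n ^ 2 ≤ n.descFactorial 2 := by
    rw [Nat.cast_descFactorial_two]
    nlinarith
  have hpow : (3 / 4 : ℝ) ≤ (1 - 2 * p) ^ (n - 2) := by
    have hbernoulli := one_add_mul_le_pow (show -2 ≤ -(2 * p) by nlinarith) (n - 2)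
    rw [Nat.cast_sub (by omega), Nat.cast_ofNat, ← sub_eq_add_neg] at hbernoulli
    nlinarith
  calc (n * p) ^ 2 / 2 ≤ 3 / 4 * n ^ 2 * (p ^ 2 * (3 / 4)) := by linarith [sq_nonneg (n * p)]
    _ ≤ occupancyProb n 2 p := by
        rw [occupancyProb, Nat.cast_ofNat]
        gcongr

lemma measureReal_occupiedOnce_inter_le [DecidableEq ι] [Fintype κ] {μ : Measure α}
    [IsProbabilityMeasure μ] {p : ℝ} {S T : Finset ι} (hST : Disjoint S T) (hcard : S.card = T.card)
    (hA : ∀ s ∈ S ∪ T, MeasurableSet (A s)) (hd : ((S ∪ T : Finset ι) : Set ι).PairwiseDisjoint A)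
    (hp : ∀ s ∈ S ∪ T, μ.real (A s) = p) (hp0 : 0 ≤ p) (hκp : 2 * Fintype.card κ * p ≤ 1) :
    (Measure.pi fun _ : κ ↦ μ).real (occupiedOnce κ A S ∩ occupiedOnce κ A T) ≤
      (Measure.pi fun _ : κ ↦ μ).real (occupiedOnce κ A S) *
        (Measure.pi fun _ : κ ↦ μ).real (occupiedOnce κ A T) := by
  have hSu : S ⊆ S ∪ T := Finset.subset_union_left
  have hTu : T ⊆ S ∪ T := Finset.subset_union_right
  rw [← occupiedOnce_union, measureReal_occupiedOnce hA hd hp,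
    measureReal_occupiedOnce (fun s hs ↦ hA s (hSu hs)) (hd.subset (by exact_mod_cast hSu))
      fun s hs ↦ hp s (hSu hs),
    measureReal_occupiedOnce (fun s hs ↦ hA s (hTu hs)) (hd.subset (by exact_mod_cast hTu))
      fun s hs ↦ hp s (hTu hs),
    Finset.card_union_of_disjoint hST, hcard, ← two_mul, ← sq]
  exact occupancyProb_two_mul_le _ hp0 hκp

end Occupancy

section Polar

/-- The Cartesian coordinates centred at `o`, as a measurable equivalence. -/
def planeEquiv (o : Plane) : ℝ × ℝ ≃ᵐ Plane :=
  (MeasurableEquiv.finTwoArrow.symm.trans (MeasurableEquiv.toLp 2 (Fin 2 → ℝ))).trans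
    (MeasurableEquiv.addLeft o)

lemma measurePreserving_planeEquiv (o : Plane) : MeasurePreserving (planeEquiv o) :=
  (measurePreserving_add_left volume o).comp <|
    (PiLp.volume_preserving_toLp (Fin 2)).comp (volume_preserving_finTwoArrow ℝ).symm

lemma volume_planeEquiv_image (o : Plane) (S : Set (ℝ × ℝ)) :
    volume (planeEquiv o '' S) = volume S := by
  rw [MeasurableEquiv.image_eq_preimage_symm]
  exact (measurePreserving_planeEquiv o).symm.measure_preimage_equiv S

lemma polarPt_eq_planeEquiv (o : Plane) (r t : ℝ) :
    polarPt o r t = planeEquiv o (polarCoord.symm (r, t)) := by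
  ext i
  fin_cases i <;> simp [polarPt, pt, planeEquiv]

lemma injOn_polarCoord_symm (a : ℝ) :
    InjOn polarCoord.symm (Ioi 0 ×ˢ Ico a (a + 2 * π)) := by
  rintro ⟨r, t⟩ ⟨hr, ht⟩ ⟨r', t'⟩ ⟨hr', ht'⟩ h
  obtain ⟨hcos, hsin⟩ : r * cos t = r' * cos t' ∧ r * sin t = r' * sin t' := Prod.mk.inj h
  have hrr' : r = r' := by
    refine (pow_left_inj₀ (le_of_lt hr) (le_of_lt hr') two_ne_zero).1 ?_
    calc r ^ 2 = (r * cos t) ^ 2 + (r * sin t) ^ 2 := by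
          linear_combination -r ^ 2 * sin_sq_add_cos_sq t
      _ = r' ^ 2 := by
          rw [hcos, hsin]
          linear_combination r' ^ 2 * sin_sq_add_cos_sq t'
  subst hrr'
  have hr0 : r ≠ 0 := ne_of_gt hr
  have hangle : (t : Real.Angle) = t' :=
    Real.Angle.cos_sin_inj (mul_left_cancel₀ hr0 hcos) (mul_left_cancel₀ hr0 hsin)
  have : Fact (0 < 2 * π) := ⟨two_pi_pos⟩
  exact Prod.ext rfl ((AddCircle.coe_eq_coe_iff_of_mem_Ico ht ht').1 hangle)

/-- The points whose polar coordinates relative to `o` lie in `S`. -/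
def polarImage (o : Plane) (S : Set (ℝ × ℝ)) : Set Plane := (fun x ↦ polarPt o x.1 x.2) '' S

lemma polarImage_eq_image (o : Plane) (S : Set (ℝ × ℝ)) :
    polarImage o S = planeEquiv o '' (polarCoord.symm '' S) := by
  simp only [polarImage, polarPt_eq_planeEquiv, image_image, Prod.mk.eta]

variable {a : ℝ} {S T : Set (ℝ × ℝ)}

lemma measurableSet_polarImage (o : Plane) (hS : MeasurableSet S)
    (ha : S ⊆ Ioi 0 ×ˢ Ico a (a + 2 * π)) : MeasurableSet (polarImage o S) := by
  rw [polarImage_eq_image, MeasurableEquiv.measurableSet_image]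
  exact hS.image_of_continuousOn_injOn continuous_polarCoord_symm.continuousOn
    ((injOn_polarCoord_symm a).mono ha)

lemma disjoint_polarImage (o : Plane) (hS : S ⊆ Ioi 0 ×ˢ Ico a (a + 2 * π))
    (hT : T ⊆ Ioi 0 ×ˢ Ico a (a + 2 * π)) (hST : Disjoint S T) :
    Disjoint (polarImage o S) (polarImage o T) := by
  simp only [polarImage_eq_image]
  exact (disjoint_image_iff (planeEquiv o).injective).2 (hST.image (injOn_polarCoord_symm a) hS hT)

lemma volume_polarImage (o : Plane) (hS : MeasurableSet S)
    (ha : S ⊆ Ioi 0 ×ˢ Ico a (a + 2 * π)) :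
    volume (polarImage o S) = ∫⁻ x in S, ENNReal.ofReal x.1 := by
  rw [polarImage_eq_image, volume_planeEquiv_image,
    ← lintegral_abs_det_fderiv_eq_addHaar_image volume hS
      (fun x _ ↦ (hasFDerivAt_polarCoord_symm x).hasFDerivWithinAt)
      ((injOn_polarCoord_symm a).mono ha)]
  refine setLIntegral_congr_fun hS fun x hx ↦ ?_
  rw [det_fderivPolarCoordSymm, abs_of_pos (ha hx).1]

lemma lintegral_Ioc_zero_ofReal {ρ : ℝ} (hρ : 0 ≤ ρ) :
    ∫⁻ r in Ioc 0 ρ, ENNReal.ofReal r = ENNReal.ofReal (ρ ^ 2 / 2) := by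
  rw [← ofReal_integral_eq_lintegral_ofReal (f := fun r : ℝ ↦ r)
    (continuous_id.intervalIntegrable 0 ρ).1
    ((ae_restrict_mem measurableSet_Ioc).mono fun r hr ↦ hr.1.le),
    ← intervalIntegral.integral_of_le hρ, integral_id, zero_pow two_ne_zero, sub_zero]

lemma volume_polarImage_Ioc_prod (o : Plane) {ρ : ℝ} (hρ : 0 ≤ ρ) {J : Set ℝ}
    (hJ : MeasurableSet J) (ha : J ⊆ Ico a (a + 2 * π)) :
    volume (polarImage o (Ioc 0 ρ ×ˢ J)) = ENNReal.ofReal (ρ ^ 2 / 2) * volume J := by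
  rw [volume_polarImage o (measurableSet_Ioc.prod hJ) (prod_mono Ioc_subset_Ioi_self ha),
    Measure.volume_eq_prod, ← Measure.prod_restrict, ← lintegral_Ioc_zero_ofReal hρ]
  simpa using lintegral_prod_mul (μ := volume.restrict (Ioc 0 ρ)) (ν := volume.restrict J)
    (f := ENNReal.ofReal) (g := 1) ENNReal.measurable_ofReal.aemeasurable aemeasurable_const

lemma polarImage_Ioc_prod_Icc_ae_eq_Ico (o : Plane) {ρ : ℝ} (hρ : 0 ≤ ρ) (a c : ℝ) :
    polarImage o (Ioc 0 ρ ×ˢ Icc a c) =ᵐ[volume] polarImage o (Ioc 0 ρ ×ˢ Ico a c) := by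
  have hray : volume (polarImage o (Ioc 0 ρ ×ˢ {c})) = 0 := by
    rw [volume_polarImage_Ioc_prod o hρ (measurableSet_singleton c)
      (singleton_subset_iff.2 (left_mem_Ico.2 (lt_add_of_pos_right c two_pi_pos))),
      Real.volume_singleton, mul_zero]
  refine (ae_le_set.2 (measure_mono_null ?_ hray)).antisymm
    (LE.le.eventuallyLE (image_mono (prod_mono_right Ico_subset_Icc_self)))
  rintro - ⟨⟨⟨r, t⟩, ⟨hr, hat, htc⟩, rfl⟩, hnot⟩
  refine ⟨(r, t), ⟨hr, ?_⟩, rfl⟩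
  by_contra hne
  exact hnot ⟨(r, t), ⟨hr, hat, lt_of_le_of_ne htc hne⟩, rfl⟩

lemma polarImage_Ioc_prod_subset (o : Plane) (ρ : ℝ) (J : Set ℝ) :
    polarImage o (Ioc 0 ρ ×ˢ J) ⊆ D o ρ := by
  rintro - ⟨⟨r, t⟩, ⟨hr, -⟩, rfl⟩
  have hunit : ‖pt (cos t) (sin t)‖ = 1 := by
    simp [EuclideanSpace.norm_eq, pt]
  change polarPt o r t ∈ D o ρ
  rw [D, Metric.mem_closedBall, polarPt, dist_self_add_left, norm_smul, hunit, mul_one,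
    Real.norm_of_nonneg hr.1.le]
  exact hr.2

end Polar

section Sectors

variable {ρ : ℝ} {n k : ℕ}

/-- The polar angles of the `k`-th of `2n` consecutive sectors of angle `π / n`, as a half-open
interval centred at `k * (π / n)`. -/
def sectorAngles (n k : ℕ) : Set ℝ :=
  Ico (((k : ℝ) - 1 / 2) * (π / n)) (((k : ℝ) + 1 / 2) * (π / n))

/-- The `k`-th of the `2n` sectors of angle `π / n` that partition the punctured disk of radius `ρ`
about `o`. Unlike in `Qsector` and `Rsector`, the last bounding ray is omitted, so that distinct
sectors are disjoint. -/
def sector (o : Plane) (ρ : ℝ) (n k : ℕ) : Set Plane := polarImage o (Ioc 0 ρ ×ˢ sectorAngles n k)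

lemma sectorAngles_subset (hk : k < 2 * n) :
    sectorAngles n k ⊆ Ico (-(1 / 2) * (π / n)) (-(1 / 2) * (π / n) + 2 * π) := by
  have hn : (n : ℝ) ≠ 0 := Nat.cast_ne_zero.2 (by omega)
  have hk' : (k : ℝ) + 1 ≤ 2 * n := by exact_mod_cast hk
  have hθ : 0 ≤ π / n := by positivity
  have hturn : 2 * π = 2 * n * (π / n) := by field_simp
  refine Ico_subset_Ico ?_ ?_
  · refine mul_le_mul_of_nonneg_right ?_ hθ
    linarith [k.cast_nonneg (α := ℝ)]
  · rw [hturn, ← add_mul]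
    refine mul_le_mul_of_nonneg_right ?_ hθ
    linarith

lemma measurableSet_sector (o : Plane) (ρ : ℝ) (hk : k < 2 * n) :
    MeasurableSet (sector o ρ n k) :=
  measurableSet_polarImage o (measurableSet_Ioc.prod measurableSet_Ico)
    (prod_mono Ioc_subset_Ioi_self (sectorAngles_subset hk))

lemma disjoint_sectorAngles {j : ℕ} (hjk : j ≠ k) :
    Disjoint (sectorAngles n j) (sectorAngles n k) := by
  wlog hlt : j < k generalizing j k
  · exact (this hjk.symm (hjk.lt_or_gt.resolve_left hlt)).symm
  refine disjoint_left.2 fun t hj hk ↦ (hj.2.trans_le (le_trans ?_ hk.1)).false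
  have hjk' : (j : ℝ) + 1 ≤ k := by exact_mod_cast hlt
  gcongr
  linarith

lemma pairwiseDisjoint_sector (o : Plane) (ρ : ℝ) (n : ℕ) :
    (Iio (2 * n)).PairwiseDisjoint (sector o ρ n) := fun _ hj _ hk hjk ↦
  disjoint_polarImage o (prod_mono Ioc_subset_Ioi_self (sectorAngles_subset hj))
    (prod_mono Ioc_subset_Ioi_self (sectorAngles_subset hk))
    (disjoint_prod.2 (.inr (disjoint_sectorAngles hjk)))

lemma volume_sector (o : Plane) (hρ : 0 ≤ ρ) (hk : k < 2 * n) :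
    volume (sector o ρ n k) = ENNReal.ofReal (ρ ^ 2 / 2 * (π / n)) := by
  rw [sector, volume_polarImage_Ioc_prod (J := sectorAngles n k) o hρ measurableSet_Ico
    (sectorAngles_subset hk), sectorAngles, Real.volume_Ico, ENNReal.ofReal_mul (by positivity)]
  congr 2
  ring

lemma sector_subset (o : Plane) (ρ : ℝ) (n k : ℕ) : sector o ρ n k ⊆ D o ρ :=
  polarImage_Ioc_prod_subset o ρ _

lemma Qsector_eq_polarImage (o : Plane) (b : ℝ) (i : ℕ) :
    Qsector o b i = polarImage o
      (Ioc 0 (δ b) ×ˢ Icc (((i : ℝ) - 1 / 2) * θb b) (((i : ℝ) + 1 / 2) * θb b)) := by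
  ext p
  constructor
  · rintro ⟨r, t, hr0, hr, hlo, hhi, rfl⟩
    exact ⟨(r, t), ⟨⟨hr0, hr⟩, hlo, hhi⟩, rfl⟩
  · rintro ⟨⟨r, t⟩, ⟨⟨hr0, hr⟩, hlo, hhi⟩, rfl⟩
    exact ⟨r, t, hr0, hr, hlo, hhi, rfl⟩

lemma Rsector_eq_Qsector_add (o : Plane) {b : ℝ} (hL : 0 < L b) (i : ℕ) :
    Rsector o b i = Qsector o b (i + L b) := by
  have hturn : L b * θb b = π := mul_div_cancel₀ π (by positivity)
  have hlo : ((i + L b : ℕ) - 1 / 2 : ℝ) * θb b = ((i : ℝ) - 1 / 2) * θb b + π := by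
    push_cast
    linear_combination hturn
  have hhi : ((i + L b : ℕ) + 1 / 2 : ℝ) * θb b = ((i : ℝ) + 1 / 2) * θb b + π := by
    push_cast
    linear_combination hturn
  simp only [Rsector, Qsector, hlo, hhi, le_sub_iff_add_le, sub_le_iff_le_add]

lemma Qsector_ae_eq_sector (o : Plane) {b : ℝ} (hδ : 0 ≤ δ b) (i : ℕ) :
    Qsector o b i =ᵐ[volume] sector o (δ b) (L b) i := by
  rw [Qsector_eq_polarImage]
  exact polarImage_Ioc_prod_Icc_ae_eq_Ico o hδ _ _

end Sectors

section UniformLaw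

open ProbabilityTheory

lemma unif_eq_cond (S : Set Plane) : unif S = cond volume S := rfl

lemma measureReal_unif_of_subset {S T : Set Plane} (hT : MeasurableSet T) (hTS : T ⊆ S) :
    (unif S).real T = volume.real T / volume.real S := by
  rw [measureReal_def, unif_eq_cond, cond_apply' hT, inter_eq_right.2 hTS,
    ENNReal.toReal_mul, ENNReal.toReal_inv, mul_comm, ← div_eq_mul_inv]
  rfl

lemma volume_Dhat_le (o : Plane) : volume (Dhat o) ≤ ENNReal.ofReal π := by
  refine (measure_mono inter_subset_left).trans_eq ?_
  rw [D, EuclideanSpace.volume_closedBall_fin_two, ENNReal.ofReal_one, one_pow, one_mul]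

lemma closedBall_quarter_subset_Dhat {o : Plane} (ho : o ∈ quad) :
    Metric.closedBall (o + pt (1 / 2) (1 / 2)) (1 / 4) ⊆ Dhat o := by
  refine subset_inter (Metric.closedBall_subset_closedBall' ?_) fun p hp ↦ ?_
  · have hnorm : ‖pt (1 / 2) (1 / 2)‖ ≤ 3 / 4 := by
      rw [EuclideanSpace.norm_eq, sqrt_le_left (by norm_num), Fin.sum_univ_two]
      norm_num [pt]
    rw [dist_self_add_left]
    linarith
  · have hcoord (i : Fin 2) : |p i - (o i + 1 / 2)| ≤ 1 / 4 := by
      have hle := (PiLp.norm_apply_le (p - (o + pt (1 / 2) (1 / 2))) i).trans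
        (mem_closedBall_iff_norm.1 hp)
      fin_cases i <;> simpa [pt] using hle
    exact ⟨by linarith [ho.1, (abs_le.1 (hcoord 0)).1], by linarith [ho.2, (abs_le.1 (hcoord 1)).1]⟩

lemma le_volume_Dhat {o : Plane} (ho : o ∈ quad) : ENNReal.ofReal (π / 16) ≤ volume (Dhat o) := by
  refine le_of_eq_of_le ?_ (measure_mono (closedBall_quarter_subset_Dhat ho))
  rw [EuclideanSpace.volume_closedBall_fin_two, ← ENNReal.ofReal_pow (by norm_num),
    ← ENNReal.ofReal_mul (by norm_num)]
  congr 1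
  ring

lemma measureReal_Dhat_mem_Icc {o : Plane} (ho : o ∈ quad) :
    volume.real (Dhat o) ∈ Icc (π / 16) π :=
  ⟨(ENNReal.ofReal_le_iff_le_toReal (ne_top_of_le_ne_top ENNReal.ofReal_ne_top
      (volume_Dhat_le o))).1 (le_volume_Dhat ho),
    ENNReal.toReal_le_of_le_ofReal pi_pos.le (volume_Dhat_le o)⟩

lemma isProbabilityMeasure_unif_Dhat {o : Plane} (ho : o ∈ quad) :
    IsProbabilityMeasure (unif (Dhat o)) := by
  have hpos : 0 < ENNReal.ofReal (π / 16) := ENNReal.ofReal_pos.2 (by positivity)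
  rw [unif_eq_cond]
  exact cond_isProbabilityMeasure_of_finite (hpos.trans_le (le_volume_Dhat ho)).ne'
    (ne_top_of_le_ne_top ENNReal.ofReal_ne_top (volume_Dhat_le o))

/-- The probability that a uniform random point of `Dhat o` lies in a given one of the `2L` sectors
of the disk `D o (δ b)`, provided this disk is contained in `Dhat o`. -/
def sectorProb (o : Plane) (b : ℝ) : ℝ := δ b ^ 2 / 2 * θb b / volume.real (Dhat o)

lemma measureReal_unif_Dhat_sector {o : Plane} {b : ℝ} {k : ℕ} (hD : D o (δ b) ⊆ quad)
    (hδ : δ b ∈ Icc 0 1) (hk : k < 2 * L b) :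
    (unif (Dhat o)).real (sector o (δ b) (L b) k) = sectorProb o b := by
  have hsub : sector o (δ b) (L b) k ⊆ Dhat o := (sector_subset o _ _ k).trans
    (subset_inter (Metric.closedBall_subset_closedBall hδ.2) hD)
  rw [measureReal_unif_of_subset (measurableSet_sector o _ hk) hsub, measureReal_def volume,
    volume_sector o hδ.1 hk, ENNReal.toReal_ofReal (by positivity)]
  rfl

end UniformLaw

section Parameters

variable {b : ℝ}

lemma pow_three_rpow_one_third (hb : 0 ≤ b) : (b ^ (1 / 3 : ℝ)) ^ 3 = b := by
  rw [← rpow_natCast, ← rpow_mul hb]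
  norm_num

lemma four_le_log (hb : exp 4 ≤ b) : 4 ≤ log b :=
  (le_log_iff_exp_le ((exp_pos 4).trans_le hb)).2 hb

lemma one_le_rpow_one_third (hb : exp 4 ≤ b) : 1 ≤ b ^ (1 / 3 : ℝ) :=
  one_le_rpow ((one_le_exp (by norm_num)).trans hb) (by norm_num)

lemma δ_mem_Icc (hb : exp 4 ≤ b) : δ b ∈ Icc 0 1 := by
  have hx := one_le_rpow_one_third hb
  have hl := four_le_log hb
  refine ⟨by rw [δ]; positivity, ?_⟩
  rw [δ, div_le_one (by positivity)]
  exact one_le_mul_of_one_le_of_one_le hx (by linarith)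

lemma L_le (hb : 0 ≤ b) : (L b : ℝ) ≤ b ^ (1 / 3 : ℝ) * log b ^ 2 :=
  Nat.floor_le (by positivity)

lemma half_le_L (hb : exp 4 ≤ b) : b ^ (1 / 3 : ℝ) * log b ^ 2 / 2 ≤ L b := by
  have hx := one_le_rpow_one_third hb
  have hl := four_le_log hb
  exact (Nat.div_two_lt_floor (one_le_mul_of_one_le_of_one_le hx (by nlinarith))).le

lemma L_pos (hb : exp 4 ≤ b) : 0 < L b := by
  have hx := one_le_rpow_one_third hb
  have hl := four_le_log hb
  exact Nat.cast_pos.1 (lt_of_lt_of_le (by positivity) (half_le_L hb))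

variable {o : Plane}

lemma sectorProb_nonneg (o : Plane) (b : ℝ) : 0 ≤ sectorProb o b := by
  unfold sectorProb θb
  positivity

lemma L_mul_sectorProb_mem_Icc (ho : o ∈ quad) (hb : exp 4 ≤ b) :
    L b * sectorProb o b ∈ Icc (δ b ^ 2 / 2) (8 * δ b ^ 2) := by
  obtain ⟨hVlo, hVhi⟩ := measureReal_Dhat_mem_Icc ho
  have hL := L_pos hb
  have hV : 0 < volume.real (Dhat o) := lt_of_lt_of_le (by positivity) hVlo
  have heq : L b * sectorProb o b = δ b ^ 2 / 2 * (π / volume.real (Dhat o)) := by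
    rw [sectorProb, θb]
    field_simp
  have hlo : 1 ≤ π / volume.real (Dhat o) := (one_le_div₀ hV).2 hVhi
  have hhi : π / volume.real (Dhat o) ≤ 16 := (div_le_iff₀ hV).2 (by linarith)
  rw [heq]
  constructor <;> nlinarith [sq_nonneg (δ b)]

lemma mul_sectorProb_le (ho : o ∈ quad) (hb : exp 4 ≤ b) : 8 * b * sectorProb o b ≤ 1 := by
  have hx := one_le_rpow_one_third hb
  have hl := four_le_log hb
  have hp := sectorProb_nonneg o b
  have hxb := pow_three_rpow_one_third ((exp_pos 4).le.trans hb)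
  have hL := half_le_L hb
  have hLp := (L_mul_sectorProb_mem_Icc ho hb).2
  rw [δ] at hLp
  set x := b ^ (1 / 3 : ℝ)
  set l := log b
  set p := sectorProb o b
  have hmain : l ^ 4 * (b * p) ≤ 16 := by
    calc l ^ 4 * (b * p) = 2 * (x * l) ^ 2 * (x * l ^ 2 / 2 * p) := by rw [← hxb]; ring
      _ ≤ 2 * (x * l) ^ 2 * (8 * (1 / (x * l)) ^ 2) :=
        mul_le_mul_of_nonneg_left ((mul_le_mul_of_nonneg_right hL hp).trans hLp) (by positivity)
      _ = 16 := by field_simp; norm_num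
  have hl4 : (4 : ℝ) ^ 4 ≤ l ^ 4 := by gcongr
  have hbp : 0 ≤ b * p := mul_nonneg ((exp_pos 4).le.trans hb) hp
  linarith [mul_le_mul_of_nonneg_right hl4 hbp]

lemma le_L_mul_sq_mul_sectorProb (ho : o ∈ quad) (hb : exp 4 ≤ b) :
    b ^ (1 / 3 : ℝ) / (8 * log b ^ 6) ≤ L b * ((b * sectorProb o b) ^ 2 / 2) := by
  have hx := one_le_rpow_one_third hb
  have hl := four_le_log hb
  have hb0 : 0 < b := (exp_pos 4).trans_le hb
  have hxb := pow_three_rpow_one_third hb0.le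
  have hL := L_le hb0.le
  have hL0 : (0 : ℝ) < L b := Nat.cast_pos.2 (L_pos hb)
  have hLp := (L_mul_sectorProb_mem_Icc ho hb).1
  rw [δ] at hLp
  set x := b ^ (1 / 3 : ℝ)
  set l := log b
  set p := sectorProb o b
  calc x / (8 * l ^ 6) = (b * ((1 / (x * l)) ^ 2 / 2)) ^ 2 / (2 * (x * l ^ 2)) := by
        rw [← hxb]
        field_simp
        norm_num
    _ ≤ (b * (L b * p)) ^ 2 / (2 * L b) := by gcongr
    _ = L b * ((b * p) ^ 2 / 2) := by field_simp

end Parameters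

section Tau

open ProbabilityTheory

variable {o : Plane} {b : ℕ}

/-- The event that the antipodal sectors with indices `i` and `i + L` each contain exactly one of
the `b` points; up to a null set, this is the event counted by the `i`-th term of `tau`. -/
def pairEvent (o : Plane) (b i : ℕ) : Set (Fin b → Plane) :=
  occupiedOnce (Fin b) (sector o (δ b) (L b)) {i, i + L b}

lemma isProbabilityMeasure_ptsMeasure (ho : o ∈ quad) (b : ℕ) :
    IsProbabilityMeasure (ptsMeasure o b) := by
  have := isProbabilityMeasure_unif_Dhat ho
  unfold ptsMeasure
  infer_instance

lemma ae_mem_Qsector_iff_mem_sector (ho : o ∈ quad) (hδ : 0 ≤ δ b) :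
    ∀ᵐ ω ∂ptsMeasure o b, ∀ i j,
      (ω j ∈ Qsector o b i ↔ ω j ∈ sector o (δ b) (L b) i) := by
  have := isProbabilityMeasure_unif_Dhat ho
  refine ae_all_iff.2 fun i ↦ ae_all_iff.2 fun j ↦ ?_
  have hunif : ∀ᵐ p ∂unif (Dhat o), p ∈ Qsector o b i ↔ p ∈ sector o (δ b) (L b) i :=
    cond_absolutelyContinuous.ae_le (Qsector_ae_eq_sector o hδ i).mem_iff
  exact (Measure.tendsto_eval_ae_ae (μ := fun _ : Fin b ↦ unif (Dhat o))).eventually hunif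

lemma tau_ae_eq (ho : o ∈ quad) (hb : exp 4 ≤ b) :
    (fun ω ↦ (tau o b ω : ℝ)) =ᵐ[ptsMeasure o b]
      fun ω ↦ ∑ i ∈ Finset.range (L b), ((pairEvent o b i).indicator 1 ω : ℝ) := by
  classical
  filter_upwards [ae_mem_Qsector_iff_mem_sector ho (δ_mem_Icc hb).1] with ω hω
  rw [tau, Nat.cast_sum]
  refine Finset.sum_congr rfl fun i _ ↦ ?_
  have hiff : ω ∈ pairEvent o b i ↔
      countIn (Qsector o b i) ω = 1 ∧ countIn (Rsector o b i) ω = 1 := by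
    simp only [pairEvent, occupiedOnce, mem_ofPred_eq, Finset.forall_mem_insert,
      Finset.mem_singleton, forall_eq, countIn, Rsector_eq_Qsector_add o (L_pos hb), hω]
  rw [indicator_apply, Nat.cast_ite, Nat.cast_one, Nat.cast_zero, Pi.one_apply]
  exact (if_congr hiff rfl rfl).symm

lemma lt_two_mul_L_of_mem_pair {i k : ℕ} (hi : i < L b) (hk : k ∈ ({i, i + L b} : Finset ℕ)) :
    k < 2 * L b := by
  rw [Finset.mem_insert, Finset.mem_singleton] at hk
  omega

lemma measurableSet_pairEvent {i : ℕ} (hi : i < L b) : MeasurableSet (pairEvent o b i) :=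
  measurableSet_occupiedOnce fun _ hk ↦
    measurableSet_sector o (δ b) (lt_two_mul_L_of_mem_pair hi hk)

lemma measureReal_pairEvent (ho : o ∈ quad) (hD : D o (δ b) ⊆ quad) (hb : exp 4 ≤ b) {i : ℕ}
    (hi : i < L b) :
    (ptsMeasure o b).real (pairEvent o b i) = occupancyProb b 2 (sectorProb o b) := by
  have := isProbabilityMeasure_unif_Dhat ho
  have hlt (k) (hk : k ∈ ({i, i + L b} : Finset ℕ)) : k < 2 * L b :=
    lt_two_mul_L_of_mem_pair hi hk
  rw [ptsMeasure, pairEvent, measureReal_occupiedOnce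
    (fun k hk ↦ measurableSet_sector o (δ b) (hlt k hk))
    ((pairwiseDisjoint_sector o (δ b) (L b)).subset hlt)
    (fun k hk ↦ measureReal_unif_Dhat_sector hD (δ_mem_Icc hb) (hlt k hk)),
    Fintype.card_fin, Finset.card_pair (by have := L_pos hb; omega)]

lemma measureReal_pairEvent_inter_le (ho : o ∈ quad) (hD : D o (δ b) ⊆ quad) (hb : exp 4 ≤ b)
    {i j : ℕ} (hi : i < L b) (hj : j < L b) (hij : i ≠ j) :
    (ptsMeasure o b).real (pairEvent o b i ∩ pairEvent o b j) ≤
      (ptsMeasure o b).real (pairEvent o b i) * (ptsMeasure o b).real (pairEvent o b j) := by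
  have := isProbabilityMeasure_unif_Dhat ho
  have hlt (k) (hk : k ∈ ({i, i + L b} ∪ {j, j + L b} : Finset ℕ)) : k < 2 * L b :=
    (Finset.mem_union.1 hk).elim (lt_two_mul_L_of_mem_pair hi) (lt_two_mul_L_of_mem_pair hj)
  have hdisj : Disjoint ({i, i + L b} : Finset ℕ) {j, j + L b} := by
    simp only [Finset.disjoint_left, Finset.mem_insert, Finset.mem_singleton]
    omega
  have hcard (k : ℕ) : ({k, k + L b} : Finset ℕ).card = 2 :=
    Finset.card_pair (by have := L_pos hb; omega)
  refine measureReal_occupiedOnce_inter_le hdisj ((hcard i).trans (hcard j).symm)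
    (fun k hk ↦ measurableSet_sector o (δ b) (hlt k hk))
    ((pairwiseDisjoint_sector o (δ b) (L b)).subset hlt)
    (fun k hk ↦ measureReal_unif_Dhat_sector hD (δ_mem_Icc hb) (hlt k hk))
    (sectorProb_nonneg o b) ?_
  rw [Fintype.card_fin]
  linarith [mul_sectorProb_le ho hb, mul_nonneg b.cast_nonneg (sectorProb_nonneg o b)]

lemma memLp_tau (ho : o ∈ quad) (hb : exp 4 ≤ b) :
    MemLp (fun ω ↦ (tau o b ω : ℝ)) 2 (ptsMeasure o b) := by
  have := isProbabilityMeasure_ptsMeasure ho b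
  exact (memLp_finsetSum (Finset.range (L b)) fun i hi ↦ memLp_indicator_one
    (measurableSet_pairEvent (Finset.mem_range.1 hi)) 2).ae_eq (tau_ae_eq ho hb).symm

lemma integral_tau_eq_sum (ho : o ∈ quad) (hb : exp 4 ≤ b) :
    ∫ ω, (tau o b ω : ℝ) ∂ptsMeasure o b =
      ∑ i ∈ Finset.range (L b), (ptsMeasure o b).real (pairEvent o b i) := by
  have := isProbabilityMeasure_ptsMeasure ho b
  rw [integral_congr_ae (tau_ae_eq ho hb),
    integral_sum_indicator_one fun i hi ↦ measurableSet_pairEvent (Finset.mem_range.1 hi)]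

lemma variance_tau_le_integral_tau (ho : o ∈ quad) (hD : D o (δ b) ⊆ quad) (hb : exp 4 ≤ b) :
    Var[fun ω ↦ (tau o b ω : ℝ); ptsMeasure o b] ≤ ∫ ω, (tau o b ω : ℝ) ∂ptsMeasure o b := by
  have := isProbabilityMeasure_ptsMeasure ho b
  rw [variance_congr (tau_ae_eq ho hb), integral_tau_eq_sum ho hb]
  refine variance_sum_indicator_one_le
    (fun i hi ↦ measurableSet_pairEvent (Finset.mem_range.1 hi)) fun i hi j hj hij ↦ ?_
  exact measureReal_pairEvent_inter_le ho hD hb (Finset.mem_range.1 hi) (Finset.mem_range.1 hj) hij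

lemma le_integral_tau (ho : o ∈ quad) (hD : D o (δ b) ⊆ quad) (hb : exp 4 ≤ b) :
    (b : ℝ) ^ (1 / 3 : ℝ) / (8 * log b ^ 6) ≤ ∫ ω, (tau o b ω : ℝ) ∂ptsMeasure o b := by
  have hb4 : 4 ≤ b := by
    have : (4 : ℝ) ≤ b := by linarith [add_one_le_exp (4 : ℝ)]
    exact_mod_cast this
  calc (b : ℝ) ^ (1 / 3 : ℝ) / (8 * log b ^ 6)
      ≤ L b * ((b * sectorProb o b) ^ 2 / 2) := le_L_mul_sq_mul_sectorProb ho hb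
    _ ≤ L b * occupancyProb b 2 (sectorProb o b) := by
        gcongr
        exact sq_div_two_le_occupancyProb_two hb4 (sectorProb_nonneg o b) (mul_sectorProb_le ho hb)
    _ = ∫ ω, (tau o b ω : ℝ) ∂ptsMeasure o b := by
        rw [integral_tau_eq_sum ho hb, Finset.sum_congr rfl fun i hi ↦
          measureReal_pairEvent ho hD hb (Finset.mem_range.1 hi), Finset.sum_const,
          Finset.card_range, nsmul_eq_mul]

end Tau

/-- There are `C > 0` and `b₀` such that for all integers `b ≥ b₀` and all
`o ∈ ℝ₊²` with `D_δ(o) ⊆ ℝ₊²`: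
`Pr(τ_b < b^{1/3} / (16 (log b)⁶)) ≤ C (log b)⁶ / b^{1/3}`. -/
theorem tau_lower_tail :
    ∃ C > (0 : ℝ), ∃ b₀ : ℕ, ∀ b : ℕ, b₀ ≤ b → ∀ o : Plane, o ∈ quad → D o (δ b) ⊆ quad →
      ptsMeasure o b
          {ω | (tau o b ω : ℝ) < (b : ℝ) ^ (1/3 : ℝ) / (16 * (Real.log b) ^ 6)} ≤
        ENNReal.ofReal (C * (Real.log b) ^ 6 / (b : ℝ) ^ (1/3 : ℝ)) := by
  refine ⟨32, by norm_num, ⌈exp 4⌉₊, fun b hb o ho hD ↦ ?_⟩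
  have := isProbabilityMeasure_ptsMeasure ho b
  have hb' : exp 4 ≤ b := Nat.ceil_le.1 hb
  have hx := one_le_rpow_one_third hb'
  have hl := four_le_log hb'
  have hmean := le_integral_tau ho hD hb'
  set x := (b : ℝ) ^ (1 / 3 : ℝ)
  set l := log b
  set m := ∫ ω, (tau o b ω : ℝ) ∂ptsMeasure o b
  have hlow : 0 < x / (8 * l ^ 6) := by positivity
  calc ptsMeasure o b {ω | (tau o b ω : ℝ) < x / (16 * l ^ 6)}
      ≤ ptsMeasure o b {ω | (tau o b ω : ℝ) ≤ m / 2} := by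
        refine measure_mono (ofPred_subset_ofPred.2 fun ω hω ↦ hω.le.trans ?_)
        calc x / (16 * l ^ 6) = x / (8 * l ^ 6) / 2 := by ring
          _ ≤ m / 2 := by gcongr
    _ ≤ ENNReal.ofReal (4 / m) := measure_le_half_integral_le (memLp_tau ho hb')
        (variance_tau_le_integral_tau ho hD hb') (hlow.trans_le hmean)
    _ ≤ ENNReal.ofReal (4 / (x / (8 * l ^ 6))) := by gcongr
    _ = ENNReal.ofReal (32 * l ^ 6 / x) := by congr 1; field_simp; norm_num
end
end
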